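/- arXiv:2206.06232 — 2 statements merged into one kernel-verified Lean document; each statement's English description precedes it below -/
import Mathlib

section
/- Let L : ℝ^d → ℝ be differentiable and β-smooth with β > 0, bounded below with infimum L*, and satisfying the μ-Polyak–Łojasiewicz inequality (1/2)‖∇L(w)‖² ≥ μ(L(w) − L*) for all w, with μ > 0. Let 0 < γ < 1/β and 0 ≤ ρ < 1/β, and define w_{t+1} = w_t − γ∇L(w_t + ρ∇L(w_t)) from any w_0 ∈ ℝ^d. Then for every t ≥ 0, L(w_t) − L* ≤ (1 − 2γμ(1 − ρβ)(1 − (γβ/2)(1 − ρβ)))^t · (L(w_0) − L*). -/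
open scoped RealInnerProductSpace

open scoped NNReal

/-!
Because `∇L` is `β`-Lipschitz, the gradient `v` at the ascent point lies within `|ρ| β ‖u‖` of
`u = ∇L x`. The quadratic upper bound for `L` then gives
`L (x - γ v) ≤ L x - γ (⟪u, v⟫ - γ β / 2 * ‖v‖ ^ 2)`, and over all `v` in that ball the bracket is
smallest at `v = (1 - |ρ| β) u`, as long as `γ β ≤ 1`. The PL inequality turns the resulting
decrease, a multiple of `‖u‖ ^ 2`, into a contraction of the gap `L x - L*`, which is iterated.
-/

section NormedSpace

variable {E F : Type*} [NormedAddCommGroup E] [NormedSpace ℝ E]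
  [NormedAddCommGroup F] [NormedSpace ℝ F]

theorem norm_sub_sub_fderiv_le_of_lipschitzWith {f : E → F} {f' : E → E →L[ℝ] F} {K : ℝ≥0}
    (hf : ∀ x, HasFDerivAt f (f' x) x) (hK : LipschitzWith K f') (x v : E) :
    ‖f (x + v) - f x - f' x v‖ ≤ K / 2 * ‖v‖ ^ 2 := by
  have hline (s : ℝ) : HasDerivAt (fun s : ℝ => x + s • v) v s := by
    simpa using ((hasDerivAt_id s).smul_const v).const_add x
  have hremainder (s : ℝ) : HasDerivAt (fun s : ℝ => f (x + s • v) - f x - s • f' x v)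
      (f' (x + s • v) v - f' x v) s := by
    simpa using (((hf _).comp_hasDerivAt s (hline s)).sub_const (f x)).fun_sub
      ((hasDerivAt_id s).smul_const (f' x v))
  have hbound (s : ℝ) : HasDerivAt (fun s : ℝ => K / 2 * ‖v‖ ^ 2 * s ^ 2)
      (K * ‖v‖ ^ 2 * s) s :=
    ((hasDerivAt_pow 2 s).const_mul (K / 2 * ‖v‖ ^ 2)).congr_deriv (by norm_num; ring)
  have hderiv_le (s : ℝ) (hs : s ∈ Set.Ico (0 : ℝ) 1) :
      ‖f' (x + s • v) v - f' x v‖ ≤ K * ‖v‖ ^ 2 * s :=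
    calc ‖f' (x + s • v) v - f' x v‖
        ≤ ‖f' (x + s • v) - f' x‖ * ‖v‖ := (f' (x + s • v) - f' x).le_opNorm v
      _ ≤ K * ‖x + s • v - x‖ * ‖v‖ := by gcongr; exact hK.norm_sub_le _ _
      _ = K * ‖v‖ ^ 2 * s := by
          rw [add_sub_cancel_left, norm_smul, Real.norm_of_nonneg hs.1]; ring
  simpa using image_norm_le_of_norm_deriv_right_le_deriv_boundary
    (fun s _ => (hremainder s).continuousAt.continuousWithinAt)
    (fun s _ => (hremainder s).hasDerivWithinAt) (by simp) hbound hderiv_le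
    (Set.right_mem_Icc.2 zero_le_one)

theorem norm_apply_add_smul_self_sub_le_of_lipschitzWith {g : E → E} {K : ℝ≥0}
    (hg : LipschitzWith K g) (ρ : ℝ) (x : E) :
    ‖g (x + ρ • g x) - g x‖ ≤ |ρ| * K * ‖g x‖ :=
  calc ‖g (x + ρ • g x) - g x‖
      ≤ K * ‖x + ρ • g x - x‖ := hg.norm_sub_le _ _
    _ = |ρ| * K * ‖g x‖ := by rw [add_sub_cancel_left, norm_smul, Real.norm_eq_abs]; ring

end NormedSpace

theorem le_pow_mul_of_nonneg_of_succ_le_mul {u : ℕ → ℝ} {c : ℝ} (hu : ∀ n, 0 ≤ u n)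
    (h : ∀ n, u (n + 1) ≤ c * u n) (n : ℕ) : u n ≤ c ^ n * u 0 := by
  rcases le_or_gt 0 c with hc | hc
  · exact le_geom hc n fun k _ => h k
  · have hzero (k : ℕ) : u k = 0 :=
      le_antisymm (nonpos_of_mul_nonneg_right ((hu (k + 1)).trans (h k)) hc) (hu k)
    simp [hzero]

theorem mul_norm_sq_le_inner_sub_of_norm_sub_le {E : Type*} [SeminormedAddCommGroup E]
    [InnerProductSpace ℝ E] {a r : ℝ} (ha₀ : 0 ≤ a) (ha₁ : a ≤ 1) {u v : E}
    (huv : ‖v - u‖ ≤ r * ‖u‖) :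
    (1 - r) * (1 - a / 2 * (1 - r)) * ‖u‖ ^ 2 ≤ ⟪u, v⟫ - a / 2 * ‖v‖ ^ 2 := by
  obtain ⟨e, rfl⟩ : ∃ e, v = u + e := ⟨v - u, (add_sub_cancel u v).symm⟩
  rw [add_sub_cancel_left] at huv
  have hinner : -(r * ‖u‖ ^ 2) ≤ ⟪u, e⟫ :=
    calc -(r * ‖u‖ ^ 2) = -(‖u‖ * (r * ‖u‖)) := by ring
      _ ≤ -(‖u‖ * ‖e‖) := by gcongr
      _ ≤ ⟪u, e⟫ := neg_le_of_abs_le (abs_real_inner_le_norm u e)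
  have hnorm : ‖e‖ ^ 2 ≤ r ^ 2 * ‖u‖ ^ 2 := by
    rw [← mul_pow]; gcongr
  calc (1 - r) * (1 - a / 2 * (1 - r)) * ‖u‖ ^ 2
      = (1 - a / 2) * ‖u‖ ^ 2 + (1 - a) * -(r * ‖u‖ ^ 2) - a / 2 * (r ^ 2 * ‖u‖ ^ 2) := by ring
    _ ≤ (1 - a / 2) * ‖u‖ ^ 2 + (1 - a) * ⟪u, e⟫ - a / 2 * ‖e‖ ^ 2 := by gcongr
    _ = ⟪u, u + e⟫ - a / 2 * ‖u + e‖ ^ 2 := by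
        rw [inner_add_right, real_inner_self_eq_norm_sq, norm_add_sq_real]; ring

/-- One full-batch step of sharpness-aware minimization (SAM) along the gradient field `g`, with
step size `γ` and ascent radius `ρ`. The ascent direction `g x` is not normalized. -/
def samStep {E : Type*} [AddCommGroup E] [Module ℝ E] (g : E → E) (γ ρ : ℝ) (x : E) : E :=
  x - γ • g (x + ρ • g x)

section Gradient

variable {E : Type*} [NormedAddCommGroup E] [InnerProductSpace ℝ E] [CompleteSpace E]
  {L : E → ℝ} {g : E → E} {β : ℝ≥0} {γ ρ μ m : ℝ}

theorem abs_sub_sub_inner_gradient_le_of_lipschitzWith (hg : ∀ x, HasGradientAt L (g x) x)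
    (hLip : LipschitzWith β g) (x v : E) :
    |L (x + v) - L x - ⟪g x, v⟫| ≤ β / 2 * ‖v‖ ^ 2 := by
  have hdual : LipschitzWith β (InnerProductSpace.toDual ℝ E ∘ g) := by
    simpa using (InnerProductSpace.toDual ℝ E).lipschitz.comp hLip
  simpa using norm_sub_sub_fderiv_le_of_lipschitzWith (fun y => (hg y).hasFDerivAt) hdual x v

theorem apply_samStep_le_sub_mul_norm_sq (hg : ∀ x, HasGradientAt L (g x) x)
    (hLip : LipschitzWith β g) (hγ₀ : 0 ≤ γ) (hγ₁ : γ * β ≤ 1) (x : E) :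
    L (samStep g γ ρ x) ≤
      L x - γ * ((1 - |ρ| * β) * (1 - γ * β / 2 * (1 - |ρ| * β)) * ‖g x‖ ^ 2) := by
  set v := g (x + ρ • g x)
  have hdescent : L (x + -(γ • v)) - L x - ⟪g x, -(γ • v)⟫ ≤ β / 2 * ‖-(γ • v)‖ ^ 2 :=
    le_of_abs_le (abs_sub_sub_inner_gradient_le_of_lipschitzWith hg hLip x _)
  calc L (samStep g γ ρ x) = L (x + -(γ • v)) := by rw [samStep, sub_eq_add_neg]
    _ ≤ L x + ⟪g x, -(γ • v)⟫ + β / 2 * ‖-(γ • v)‖ ^ 2 := by linarith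
    _ = L x - γ * (⟪g x, v⟫ - γ * β / 2 * ‖v‖ ^ 2) := by
        rw [inner_neg_right, real_inner_smul_right, norm_neg, norm_smul, mul_pow,
          Real.norm_eq_abs, sq_abs]
        ring
    _ ≤ L x - γ * ((1 - |ρ| * β) * (1 - γ * β / 2 * (1 - |ρ| * β)) * ‖g x‖ ^ 2) := by
        gcongr
        exact mul_norm_sq_le_inner_sub_of_norm_sub_le (by positivity) hγ₁
          (norm_apply_add_smul_self_sub_le_of_lipschitzWith hLip ρ x)

theorem apply_samStep_sub_le_mul_of_polyakLojasiewicz (hg : ∀ x, HasGradientAt L (g x) x)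
    (hLip : LipschitzWith β g) (hγ₀ : 0 ≤ γ) (hγ₁ : γ * β ≤ 1) (hρ : |ρ| * β ≤ 1) {x : E}
    (hPL : μ * (L x - m) ≤ 1 / 2 * ‖g x‖ ^ 2) :
    L (samStep g γ ρ x) - m ≤
      (1 - 2 * γ * μ * (1 - |ρ| * β) * (1 - γ * β / 2 * (1 - |ρ| * β))) * (L x - m) := by
  have hρβ : 0 ≤ |ρ| * β := by positivity
  have hascent : 0 ≤ 1 - |ρ| * β := sub_nonneg.2 hρ
  have hstep : 0 ≤ 1 - γ * β / 2 * (1 - |ρ| * β) :=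
    sub_nonneg.2 (mul_le_one₀ (by linarith) hascent (by linarith))
  have hrate : 0 ≤ 2 * γ * (1 - |ρ| * β) * (1 - γ * β / 2 * (1 - |ρ| * β)) :=
    mul_nonneg (by positivity) hstep
  linarith [apply_samStep_le_sub_mul_norm_sq (ρ := ρ) hg hLip hγ₀ hγ₁ x,
    mul_le_mul_of_nonneg_left hPL hrate]

theorem sam_fullbatch_convergence_pl_general (hg : ∀ x, HasGradientAt L (g x) x)
    (hLip : LipschitzWith β g) (hm : m ∈ lowerBounds (Set.range L))
    (hPL : ∀ x, μ * (L x - m) ≤ 1 / 2 * ‖g x‖ ^ 2) (hγ₀ : 0 ≤ γ) (hγ₁ : γ * β ≤ 1)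
    (hρ : |ρ| * β ≤ 1) {w : ℕ → E} (hw : ∀ t, w (t + 1) = samStep g γ ρ (w t)) (t : ℕ) :
    L (w t) - m ≤
      (1 - 2 * γ * μ * (1 - |ρ| * β) * (1 - γ * β / 2 * (1 - |ρ| * β))) ^ t * (L (w 0) - m) := by
  have hgap (s : ℕ) : 0 ≤ L (w s) - m := sub_nonneg.2 (hm ⟨w s, rfl⟩)
  refine le_pow_mul_of_nonneg_of_succ_le_mul hgap (fun s => ?_) t
  rw [hw]
  exact apply_samStep_sub_le_mul_of_polyakLojasiewicz hg hLip hγ₀ hγ₁ hρ (hPL (w s))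

end Gradient

/-- Linear convergence of full-batch SAM under the Polyak–Łojasiewicz
condition: if `L` is differentiable, `β`-smooth (`β > 0`), bounded below with infimum `L*`,
satisfies the `μ`-PL inequality `(1/2)‖∇L(w)‖² ≥ μ(L(w) − L*)` with `μ > 0`, and
`0 < γ < 1/β`, `0 ≤ ρ < 1/β`, then the iterates `w_{t+1} = w_t − γ∇L(w_t + ρ∇L(w_t))`
satisfy, for every `t`,
`L(w_t) − L* ≤ (1 − 2γμ(1 − ρβ)(1 − (γβ/2)(1 − ρβ)))^t · (L(w_0) − L*)`. -/
theorem sam_fullbatch_convergence_pl {d : ℕ}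
    (L : EuclideanSpace ℝ (Fin d) → ℝ)
    (g : EuclideanSpace ℝ (Fin d) → EuclideanSpace ℝ (Fin d))
    (hg : ∀ x, HasGradientAt L (g x) x)
    (β : ℝ) (hβ : 0 < β) (hLip : LipschitzWith β.toNNReal g)
    (Lstar : ℝ) (hinf : IsGLB (Set.range L) Lstar)
    (μ : ℝ) (hμ : 0 < μ)
    (hPL : ∀ v, μ * (L v - Lstar) ≤ 1 / 2 * ‖g v‖ ^ 2)
    (γ ρ : ℝ) (hγ0 : 0 < γ) (hγ1 : γ < 1 / β) (hρ0 : 0 ≤ ρ) (hρ1 : ρ < 1 / β)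
    (w : ℕ → EuclideanSpace ℝ (Fin d))
    (hrec : ∀ t : ℕ, w (t + 1) = w t - γ • g (w t + ρ • g (w t)))
    (t : ℕ) :
    L (w t) - Lstar ≤
      (1 - 2 * γ * μ * (1 - ρ * β) * (1 - γ * β / 2 * (1 - ρ * β))) ^ t * (L (w 0) - Lstar) := by
  lift β to ℝ≥0 using hβ.le
  rw [Real.toNNReal_coe] at hLip
  have hγβ : γ * β ≤ 1 := ((lt_div_iff₀ hβ).1 hγ1).le
  have hρβ : |ρ| * β ≤ 1 := by simpa only [abs_of_nonneg hρ0] using ((lt_div_iff₀ hβ).1 hρ1).le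
  simpa only [abs_of_nonneg hρ0] using
    sam_fullbatch_convergence_pl_general hg hLip hinf.1 hPL hγ0.le hγβ hρβ hrec t
end

section
/- Assume each ℓ_i is differentiable, ∇L is β-Lipschitz with β > 0, and the bounded variance condition (A1) holds with constant σ ≥ 0. Fix a batch size b ≥ 1, step sizes 0 ≤ γ ≤ 1/(2β) and 0 ≤ ρ ≤ 1/(2β), and a point w ∈ ℝ^d. For batches I, J ∈ {1,…,n}^b define the n-SAM step w⁺(I,J) = w − γ∇L_I(w + ρ∇L_J(w)). Then, averaging uniformly over all pairs (I, J), E_{I,J} L(w⁺(I,J)) ≤ L(w) − (γ/4)·‖∇L(w)‖² + γβ(σ²/b)(γ + ρ²β). -/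
open scoped RealInnerProductSpace

/-- The full (training) loss `L(w) = (1/n) ∑ᵢ ℓᵢ(w)`. -/
noncomputable def fullLoss {d n : ℕ} (ℓ : Fin n → EuclideanSpace ℝ (Fin d) → ℝ)
    (w : EuclideanSpace ℝ (Fin d)) : ℝ :=
  (n : ℝ)⁻¹ * ∑ i, ℓ i w

/-- The full gradient `∇L(w) = (1/n) ∑ᵢ ∇ℓᵢ(w)` (given per-example gradients `g i`). -/
noncomputable def fullGrad {d n : ℕ}
    (g : Fin n → EuclideanSpace ℝ (Fin d) → EuclideanSpace ℝ (Fin d))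
    (w : EuclideanSpace ℝ (Fin d)) : EuclideanSpace ℝ (Fin d) :=
  (n : ℝ)⁻¹ • ∑ i, g i w

/-- The mini-batch gradient `∇L_J(w) = (1/b) ∑_{k<b} ∇ℓ_{J k}(w)` for a batch
`J : Fin b → Fin n` (sampling with replacement). -/
noncomputable def batchGrad {d n b : ℕ}
    (g : Fin n → EuclideanSpace ℝ (Fin d) → EuclideanSpace ℝ (Fin d))
    (J : Fin b → Fin n) (w : EuclideanSpace ℝ (Fin d)) : EuclideanSpace ℝ (Fin d) :=
  (b : ℝ)⁻¹ • ∑ k, g (J k) w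

/-!
The average of `b` independent uniform draws is unbiased and has `1 / b` times the variance of a
single draw, because distinct draws are uncorrelated.

Let `m` and `V` be the mean and the variance of the descent direction. Taking expectations in the
quadratic upper bound for `L` leaves `-γ⟪∇L(w), m⟫ + (β / 2) γ² (‖m‖² + V)`. Polarization turns the
inner product into `(γ / 2) (‖m - ∇L(w)‖² - ‖∇L(w)‖² - ‖m‖²)`, and `γβ ≤ 1` lets `-(γ / 2) ‖m‖²`
absorb the quadratic term in `m`. For a SAM step, `m` is the gradient at the ascent point, so
`‖m - ∇L(w)‖` is at most `|ρ| β` times the norm of the ascent direction, whose second moment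
contributes the remaining gradient and variance terms.
-/

open Finset
open scoped BigOperators NNReal

section UniformSampling

variable {ι κ M V : Type*} [Fintype ι] [Fintype κ] [AddCommMonoid M] [Module ℚ≥0 M]

theorem expect_eq_inv_card_smul_sum [AddCommGroup V] [Module ℝ V] [Module ℚ≥0 V]
    (f : ι → V) : 𝔼 i, f i = (Fintype.card ι : ℝ)⁻¹ • ∑ i, f i := by
  rw [expect, card_univ, ← NNRat.cast_smul_eq_nnqsmul ℝ]
  simp

theorem expect_restrict_eq_expect_expect [DecidableEq κ] (k : κ)
    (F : ι → ({l // l ≠ k} → ι) → M) :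
    𝔼 J : κ → ι, F (J k) (fun l ↦ J l) = 𝔼 i, 𝔼 r, F i r := by
  rw [← expect_product', univ_product_univ]
  exact Fintype.expect_equiv (Equiv.funSplitAt k ι) _ _ fun _ ↦ rfl

variable [Nonempty ι]

theorem expect_eval [DecidableEq κ] (k : κ) (f : ι → M) :
    𝔼 J : κ → ι, f (J k) = 𝔼 i, f i := by
  simp only [expect_restrict_eq_expect_expect k fun i _ ↦ f i, Fintype.expect_const]

theorem expect_eval_eval [DecidableEq κ] {k l : κ} (hkl : k ≠ l) (f : ι → ι → M) :
    𝔼 J : κ → ι, f (J k) (J l) = 𝔼 i, 𝔼 j, f i j := by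
  rw [expect_restrict_eq_expect_expect k fun i r ↦ f i (r ⟨l, hkl.symm⟩)]
  simp only [expect_eval]

theorem expect_expect_eval [DecidableEq κ] [Nonempty κ] (f : ι → M) :
    𝔼 J : κ → ι, 𝔼 k, f (J k) = 𝔼 i, f i := by
  rw [expect_comm]
  simp only [expect_eval, Fintype.expect_const]

end UniformSampling

section SecondMoments

-- `𝔼` needs a `ℚ≥0`-module structure, which is unique but is not inferred from the real one.
variable {ι κ E : Type*} [Fintype ι] [Fintype κ] [NormedAddCommGroup E] [InnerProductSpace ℝ E]
  [Module ℚ≥0 E]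

theorem inner_expect (x : E) (f : ι → E) : ⟪x, 𝔼 i, f i⟫ = 𝔼 i, ⟪x, f i⟫ :=
  map_expect ((innerₗ E x).restrictScalars ℚ≥0) f univ

theorem expect_inner (f : ι → E) (x : E) : ⟪𝔼 i, f i, x⟫ = 𝔼 i, ⟪f i, x⟫ := by
  simp only [real_inner_comm x, inner_expect]

theorem norm_expect_sq (f : ι → E) : ‖𝔼 i, f i‖ ^ 2 = 𝔼 i, 𝔼 j, ⟪f i, f j⟫ := by
  rw [← real_inner_self_eq_norm_sq, expect_inner]
  simp only [inner_expect]

variable [Nonempty ι]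

theorem expect_norm_sq (f : ι → E) :
    𝔼 i, ‖f i‖ ^ 2 = ‖𝔼 i, f i‖ ^ 2 + 𝔼 i, ‖f i - 𝔼 j, f j‖ ^ 2 := by
  simp only [norm_sub_sq_real, expect_add_distrib, expect_sub_distrib, ← mul_expect,
    ← expect_inner, Fintype.expect_const, real_inner_self_eq_norm_sq]
  ring

variable [Nonempty κ] [DecidableEq κ]

theorem expect_norm_expect_eval_sq {c : ι → E} (hc : 𝔼 i, c i = 0) :
    𝔼 J : κ → ι, ‖𝔼 k, c (J k)‖ ^ 2 = (𝔼 i, ‖c i‖ ^ 2) / Fintype.card κ := by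
  have covariance (k l : κ) :
      𝔼 J : κ → ι, ⟪c (J k), c (J l)⟫ = if k = l then 𝔼 i, ‖c i‖ ^ 2 else 0 := by
    split_ifs with hkl
    · simp only [hkl, real_inner_self_eq_norm_sq, expect_eval l fun i ↦ ‖c i‖ ^ 2]
    · rw [expect_eval_eval hkl fun i j ↦ ⟪c i, c j⟫, ← norm_expect_sq, hc]
      simp
  calc 𝔼 J : κ → ι, ‖𝔼 k, c (J k)‖ ^ 2
      = 𝔼 k, 𝔼 l, 𝔼 J : κ → ι, ⟪c (J k), c (J l)⟫ := by
        simp only [norm_expect_sq]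
        rw [expect_comm]
        exact expect_congr rfl fun k _ ↦ expect_comm _ _ _
    _ = (𝔼 i, ‖c i‖ ^ 2) / Fintype.card κ := by
        simp only [covariance, Fintype.expect_ite_eq, Fintype.expect_const]
        rw [← NNRat.cast_smul_eq_nnqsmul ℝ, smul_eq_mul, div_eq_inv_mul]
        simp

theorem expect_norm_expect_eval_sub_sq (f : ι → E) :
    𝔼 J : κ → ι, ‖𝔼 k, f (J k) - 𝔼 i, f i‖ ^ 2 =
      (𝔼 i, ‖f i - 𝔼 j, f j‖ ^ 2) / Fintype.card κ := by
  have centered : 𝔼 i, (f i - 𝔼 j, f j) = 0 := by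
    rw [expect_sub_distrib, Fintype.expect_const, sub_self]
  simpa only [expect_sub_distrib, Fintype.expect_const] using
    expect_norm_expect_eval_sq (κ := κ) centered

end SecondMoments

section Descent

variable {E : Type*} [NormedAddCommGroup E] [InnerProductSpace ℝ E] [CompleteSpace E]

theorem hasGradientAt_expect {ι : Type*} [Fintype ι] [Module ℚ≥0 E] {f : ι → E → ℝ} {f' : ι → E}
    {x : E} (hf : ∀ i, HasGradientAt (f i) (f' i) x) :
    HasGradientAt (fun y ↦ 𝔼 i, f i y) (𝔼 i, f' i) x := by
  simp only [hasGradientAt_iff_hasFDerivAt, expect_eq_inv_card_smul_sum, map_smul, map_sum] at hf ⊢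
  exact (HasFDerivAt.fun_sum fun i _ ↦ hf i).fun_const_smul _

variable {L : E → ℝ} {G : E → E} {β : ℝ≥0}

theorem le_add_inner_add_norm_sq_of_lipschitzWith (hL : ∀ x, HasGradientAt L (G x) x)
    (hG : LipschitzWith β G) (x v : E) : L (x + v) ≤ L x + ⟪G x, v⟫ + β / 2 * ‖v‖ ^ 2 := by
  let φ (t : ℝ) : ℝ := L (x + t • v) - t * ⟪G x, v⟫ - β / 2 * ‖v‖ ^ 2 * t ^ 2
  have hφ (t : ℝ) : HasDerivAt φ (⟪G (x + t • v) - G x, v⟫ - β * ‖v‖ ^ 2 * t) t := by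
    have line : HasDerivAt (fun t : ℝ ↦ x + t • v) v t := by
      simpa using ((hasDerivAt_id t).smul_const v).const_add x
    have loss : HasDerivAt (fun t : ℝ ↦ L (x + t • v)) ⟪G (x + t • v), v⟫ t := by
      simpa [Function.comp_def] using (hL (x + t • v)).hasFDerivAt.comp_hasDerivAt t line
    refine ((loss.sub ((hasDerivAt_id t).mul_const ⟪G x, v⟫)).sub
      ((hasDerivAt_pow 2 t).const_mul (β / 2 * ‖v‖ ^ 2))).congr_deriv ?_
    rw [inner_sub_left]
    ring
  have inner_le (t : ℝ) (ht : 0 ≤ t) : ⟪G (x + t • v) - G x, v⟫ ≤ β * ‖v‖ ^ 2 * t :=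
    calc ⟪G (x + t • v) - G x, v⟫
        ≤ ‖G (x + t • v) - G x‖ * ‖v‖ := real_inner_le_norm _ _
      _ ≤ β * ‖x + t • v - x‖ * ‖v‖ := by gcongr; exact hG.norm_sub_le _ _
      _ = β * ‖v‖ ^ 2 * t := by
        rw [add_sub_cancel_left, norm_smul, Real.norm_of_nonneg ht]
        ring
  have anti : AntitoneOn φ (Set.Ici 0) := by
    refine antitoneOn_of_hasDerivWithinAt_nonpos (convex_Ici 0)
      (fun t _ ↦ (hφ t).continuousAt.continuousWithinAt) (fun t _ ↦ (hφ t).hasDerivWithinAt)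
      fun t ht ↦ sub_nonpos.2 (inner_le t ?_)
    exact interior_subset ht
  have endpoints : φ 1 ≤ φ 0 := anti Set.self_mem_Ici (Set.mem_Ici.2 zero_le_one) zero_le_one
  simp only [φ, one_smul, zero_smul, add_zero] at endpoints
  linarith

variable {Ω Ω' : Type*} [Fintype Ω] [Nonempty Ω] [Fintype Ω'] [Nonempty Ω'] [Module ℚ≥0 E]

theorem expect_sub_smul_le (hL : ∀ x, HasGradientAt L (G x) x) (hG : LipschitzWith β G)
    (γ : ℝ) (w : E) (X : Ω → E) :
    𝔼 ω, L (w - γ • X ω) ≤ L w - γ * ⟪G w, 𝔼 ω, X ω⟫ +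
      β / 2 * γ ^ 2 * (‖𝔼 ω, X ω‖ ^ 2 + 𝔼 ω, ‖X ω - 𝔼 ω', X ω'‖ ^ 2) :=
  calc 𝔼 ω, L (w - γ • X ω)
      ≤ 𝔼 ω, (L w - γ * ⟪G w, X ω⟫ + β / 2 * γ ^ 2 * ‖X ω‖ ^ 2) := by
        gcongr with ω
        have := le_add_inner_add_norm_sq_of_lipschitzWith hL hG w (-(γ • X ω))
        rw [← sub_eq_add_neg, inner_neg_right, inner_smul_right, norm_neg, norm_smul, mul_pow,
          Real.norm_eq_abs, sq_abs] at this
        linarith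
    _ = _ := by
        rw [← expect_norm_sq]
        simp only [expect_add_distrib, expect_sub_distrib, Fintype.expect_const, ← mul_expect,
          ← inner_expect]

theorem expect_sub_smul_le_of_mul_le_one (hL : ∀ x, HasGradientAt L (G x) x)
    (hG : LipschitzWith β G) {γ : ℝ} (hγ : 0 ≤ γ) (hγβ : γ * β ≤ 1) (w : E) (X : Ω → E) :
    𝔼 ω, L (w - γ • X ω) ≤ L w - γ / 2 * ‖G w‖ ^ 2 + γ / 2 * ‖𝔼 ω, X ω - G w‖ ^ 2 +
      β / 2 * γ ^ 2 * 𝔼 ω, ‖X ω - 𝔼 ω', X ω'‖ ^ 2 := by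
  have descent := expect_sub_smul_le hL hG γ w X
  have polarization := norm_sub_sq_real (𝔼 ω, X ω) (G w)
  rw [real_inner_comm] at polarization
  have absorb : γ * β * (γ / 2 * ‖𝔼 ω, X ω‖ ^ 2) ≤ γ / 2 * ‖𝔼 ω, X ω‖ ^ 2 :=
    mul_le_of_le_one_left (by positivity) hγβ
  rw [polarization]
  linarith

theorem expect_sam_step_le (hL : ∀ x, HasGradientAt L (G x) x) (hG : LipschitzWith β G)
    {X : Ω → E → E} (hX : ∀ x, 𝔼 ω, X ω x = G x) {s : ℝ}
    (hs : ∀ x, 𝔼 ω, ‖X ω x - G x‖ ^ 2 ≤ s) {w : E} {Y : Ω' → E} (hY : 𝔼 ω, Y ω = G w) {s' : ℝ}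
    (hs' : 𝔼 ω, ‖Y ω - G w‖ ^ 2 ≤ s') {γ : ℝ} (hγ : 0 ≤ γ) (hγβ : γ * β ≤ 1) (ρ : ℝ) :
    𝔼 ω, 𝔼 ω', L (w - γ • X ω (w + ρ • Y ω')) ≤
      L w - γ / 2 * (1 - (ρ * β) ^ 2) * ‖G w‖ ^ 2 + γ * β / 2 * (γ * s + ρ ^ 2 * β * s') := by
  have drift (y : E) : ‖G (w + ρ • y) - G w‖ ^ 2 ≤ (ρ * β) ^ 2 * ‖y‖ ^ 2 :=
    calc ‖G (w + ρ • y) - G w‖ ^ 2 ≤ (β * ‖w + ρ • y - w‖) ^ 2 := by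
          gcongr
          exact hG.norm_sub_le _ _
      _ = (ρ * β) ^ 2 * ‖y‖ ^ 2 := by
          rw [add_sub_cancel_left, norm_smul, Real.norm_eq_abs, mul_pow, mul_pow, sq_abs]
          ring
  have step (y : E) : 𝔼 ω, L (w - γ • X ω (w + ρ • y)) ≤
      L w - γ / 2 * ‖G w‖ ^ 2 + γ / 2 * ((ρ * β) ^ 2 * ‖y‖ ^ 2) + β / 2 * γ ^ 2 * s := by
    refine (expect_sub_smul_le_of_mul_le_one hL hG hγ hγβ w fun ω ↦ X ω (w + ρ • y)).trans ?_
    rw [hX]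
    gcongr
    · exact drift y
    · exact hs _
  have ascent : 𝔼 ω, ‖Y ω‖ ^ 2 ≤ ‖G w‖ ^ 2 + s' := by
    rw [expect_norm_sq, hY]
    gcongr
  calc 𝔼 ω, 𝔼 ω', L (w - γ • X ω (w + ρ • Y ω'))
      = 𝔼 ω', 𝔼 ω, L (w - γ • X ω (w + ρ • Y ω')) := expect_comm _ _ _
    _ ≤ 𝔼 ω', (L w - γ / 2 * ‖G w‖ ^ 2 + γ / 2 * ((ρ * β) ^ 2 * ‖Y ω'‖ ^ 2) +
          β / 2 * γ ^ 2 * s) := by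
        gcongr with ω'
        exact step _
    _ = L w - γ / 2 * ‖G w‖ ^ 2 + γ / 2 * ((ρ * β) ^ 2 * 𝔼 ω', ‖Y ω'‖ ^ 2) +
          β / 2 * γ ^ 2 * s := by
        simp only [expect_add_distrib, Fintype.expect_const, ← mul_expect]
    _ ≤ L w - γ / 2 * ‖G w‖ ^ 2 + γ / 2 * ((ρ * β) ^ 2 * (‖G w‖ ^ 2 + s')) +
          β / 2 * γ ^ 2 * s := by gcongr
    _ = _ := by ring

theorem nsam_stochastic_descent_general {ι κ : Type*} [Fintype ι] [Nonempty ι] [Fintype κ]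
    [Nonempty κ] [DecidableEq κ] {g : ι → E → E} (hL : ∀ x, HasGradientAt L (𝔼 i, g i x) x)
    (hLip : LipschitzWith β fun x ↦ 𝔼 i, g i x) {s : ℝ}
    (hvar : ∀ x, 𝔼 i, ‖g i x - 𝔼 j, g j x‖ ^ 2 ≤ s) {γ : ℝ} (hγ : 0 ≤ γ) (hγβ : γ * β ≤ 1)
    (ρ : ℝ) (w : E) :
    𝔼 I : κ → ι, 𝔼 J : κ → ι, L (w - γ • 𝔼 k, g (I k) (w + ρ • 𝔼 l, g (J l) w)) ≤
      L w - γ / 2 * (1 - (ρ * β) ^ 2) * ‖𝔼 i, g i w‖ ^ 2 +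
        γ * β / 2 * (s / Fintype.card κ) * (γ + ρ ^ 2 * β) := by
  have unbiased (x : E) : 𝔼 J : κ → ι, 𝔼 k, g (J k) x = 𝔼 i, g i x :=
    expect_expect_eval fun i ↦ g i x
  have variance_le (x : E) :
      𝔼 J : κ → ι, ‖𝔼 k, g (J k) x - 𝔼 i, g i x‖ ^ 2 ≤ s / Fintype.card κ := by
    rw [expect_norm_expect_eval_sub_sq fun i ↦ g i x]
    gcongr
    exact hvar x
  refine (expect_sam_step_le hL hLip unbiased variance_le (unbiased w) (variance_le w)
    hγ hγβ ρ).trans_eq ?_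
  ring

end Descent

section FiniteSum

variable {d n b : ℕ}

theorem fullLoss_eq_expect (ℓ : Fin n → EuclideanSpace ℝ (Fin d) → ℝ) :
    fullLoss ℓ = fun w ↦ 𝔼 i, ℓ i w := by
  funext w
  simp [fullLoss, expect_eq_inv_card_smul_sum]

theorem fullGrad_eq_expect (g : Fin n → EuclideanSpace ℝ (Fin d) → EuclideanSpace ℝ (Fin d)) :
    fullGrad g = fun w ↦ 𝔼 i, g i w := by
  funext w
  simp [fullGrad, expect_eq_inv_card_smul_sum]

theorem batchGrad_eq_expect (g : Fin n → EuclideanSpace ℝ (Fin d) → EuclideanSpace ℝ (Fin d))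
    (J : Fin b → Fin n) : batchGrad g J = fun w ↦ 𝔼 k, g (J k) w := by
  funext w
  simp [batchGrad, expect_eq_inv_card_smul_sum]

theorem inv_pow_mul_pow_mul_sum_sum_eq_expect_expect (f : (Fin b → Fin n) → (Fin b → Fin n) → ℝ) :
    ((n : ℝ) ^ b * (n : ℝ) ^ b)⁻¹ * ∑ I, ∑ J, f I J = 𝔼 I, 𝔼 J, f I J := by
  simp [expect_eq_inv_card_smul_sum, ← mul_sum, mul_assoc]

end FiniteSum

/-- Expected descent for one stochastic n-SAM step (different batches for
ascent and descent): under (A1), `β`-Lipschitzness of `∇L`, and `0 ≤ γ ≤ 1/(2β)`,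
`0 ≤ ρ ≤ 1/(2β)`, averaging over all pairs of batches `(I, J)`,
`E L(w − γ∇L_I(w + ρ∇L_J(w))) ≤ L(w) − (γ/4)‖∇L(w)‖² + γβ(σ²/b)(γ + ρ²β)`. -/
theorem nsam_stochastic_descent {d n b : ℕ} (hn : 0 < n) (hb : 1 ≤ b)
    (ℓ : Fin n → EuclideanSpace ℝ (Fin d) → ℝ)
    (g : Fin n → EuclideanSpace ℝ (Fin d) → EuclideanSpace ℝ (Fin d))
    (hg : ∀ i x, HasGradientAt (ℓ i) (g i x) x)
    (β : ℝ) (hβ : 0 < β) (hLip : LipschitzWith β.toNNReal (fullGrad g))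
    (σ : ℝ) (hσ : 0 ≤ σ)
    (hvar : ∀ x, (n : ℝ)⁻¹ * ∑ i, ‖g i x - fullGrad g x‖ ^ 2 ≤ σ ^ 2)
    (γ ρ : ℝ) (hγ0 : 0 ≤ γ) (hγ1 : γ ≤ 1 / (2 * β)) (hρ0 : 0 ≤ ρ) (hρ1 : ρ ≤ 1 / (2 * β))
    (w : EuclideanSpace ℝ (Fin d)) :
    ((n : ℝ) ^ b * (n : ℝ) ^ b)⁻¹ *
        ∑ I : Fin b → Fin n, ∑ J : Fin b → Fin n,
          fullLoss ℓ (w - γ • batchGrad g I (w + ρ • batchGrad g J w)) ≤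
      fullLoss ℓ w - γ / 4 * ‖fullGrad g w‖ ^ 2 + γ * β * (σ ^ 2 / b) * (γ + ρ ^ 2 * β) := by
  have : NeZero n := ⟨hn.ne'⟩
  have : NeZero b := ⟨by lia⟩
  lift β to ℝ≥0 using hβ.le
  rw [Real.toNNReal_coe, fullGrad_eq_expect] at hLip
  have hL (x) : HasGradientAt (fullLoss ℓ) (𝔼 i, g i x) x := by
    rw [fullLoss_eq_expect]
    exact hasGradientAt_expect (hg · x)
  have hvar' (x) : 𝔼 i, ‖g i x - 𝔼 j, g j x‖ ^ 2 ≤ σ ^ 2 := by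
    simpa [expect_eq_inv_card_smul_sum, fullGrad] using hvar x
  rw [le_div_iff₀ (by positivity)] at hγ1 hρ1
  have hρβ : (ρ * β) ^ 2 ≤ 1 / 4 := by nlinarith [mul_nonneg hρ0 hβ.le]
  have general := nsam_stochastic_descent_general (κ := Fin b) hL hLip hvar' hγ0 (by linarith) ρ w
  simp only [inv_pow_mul_pow_mul_sum_sum_eq_expect_expect, batchGrad_eq_expect, fullGrad_eq_expect]
  refine general.trans ?_
  rw [Fintype.card_fin]
  have descent_coeff : γ / 4 ≤ γ / 2 * (1 - (ρ * β) ^ 2) := by nlinarith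
  gcongr
  exact half_le_self (by positivity)
end
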